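/- arXiv:1703.07728 — 2 statements merged into one kernel-verified Lean document; each statement's English description precedes it below -/
import Mathlib

section
/- Let B = {x ∈ ℝ^N : |x| ≤ r_N} be the Euclidean ball of volume 1 in ℝ^N. Then there exists a constant c > π r_N / N such that for all ζ ∈ ℝ^N with |ζ| ≤ 1, the Fourier transform of χ_B satisfies |χ̂_B(ζ)| ≤ e^{-c|ζ|²}, for c chosen appropriately (in particular, a Gaussian upper bound of the form e^{-c|ζ|²} holds on the unit ball for some c > 0). -/
open MeasureTheory Real
open scoped RealInnerProductSpace

/-!
Slicing the ball of radius `r` orthogonally to `ζ` turns its Fourier transform into a Poisson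
integral `y (2 π r |ζ|)`, up to a constant factor, where `y` solves the Bessel equation
`t y'' + a y' + t y = 0` with `a = N + 1`. As long as `y` is nonnegative, the equation forces
`y' + t y / (a + 1) ≤ 0`, so `y t ≤ y 0 * exp (-t ^ 2 / (2 * (a + 1)))`; this is the Gaussian bound
with `c = 2 (π r) ^ 2 / (N + 2)`. Sturm comparison with `sin (ω t) / (ω t)`, `ω ^ 2 = 3 / (a + 1)`,
shows that `y` is nonnegative while `3 t ^ 2 ≤ (a + 1) π ^ 2`, that is, while
`12 (r |ζ|) ^ 2 ≤ N + 2`. For the ball of volume `1`, bounds on the Gamma function give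
`12 r ^ 2 ≤ N + 2`, which covers `|ζ| ≤ 1`, and `1 / 2 ≤ r`, which gives `c > π r / N`.
-/

section BesselEquation

theorem nonpos_of_mul_deriv_add_mul_nonpos {a : ℝ} (ha : 0 < a) {w w' : ℝ → ℝ}
    (hw : ∀ t, HasDerivAt w (w' t) t) {t : ℝ} (ht : 0 < t)
    (h : ∀ s ∈ Set.Ioo 0 t, s * w' s + a * w s ≤ 0) : w t ≤ 0 := by
  have hanti : AntitoneOn (fun s => s ^ a * w s) (Set.Icc 0 t) := by
    refine antitoneOn_of_hasDerivWithinAt_nonpos (convex_Icc 0 t)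
      (f' := fun s => s ^ (a - 1) * (s * w' s + a * w s)) ?_ (fun s hs => ?_) fun s hs => ?_
    · exact ((continuous_id.rpow_const fun _ => Or.inr ha.le).mul
        (continuous_iff_continuousAt.2 fun s => (hw s).continuousAt)).continuousOn
    · rw [interior_Icc] at hs
      refine HasDerivAt.hasDerivWithinAt <|
        ((hasDerivAt_rpow_const (Or.inl hs.1.ne')).mul (hw s)).congr_deriv ?_
      rw [rpow_sub_one hs.1.ne']
      field_simp [hs.1.ne']
      ring
    · rw [interior_Icc] at hs
      exact mul_nonpos_of_nonneg_of_nonpos (rpow_nonneg hs.1.le _) (h s hs)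
  have hle := hanti (Set.left_mem_Icc.2 ht.le) (Set.right_mem_Icc.2 ht.le) ht.le
  simp only [zero_rpow ha.ne', zero_mul] at hle
  exact nonpos_of_mul_nonpos_right hle (rpow_pos_of_pos ht a)

/-- `y` solves the equation `t y'' + a y' + t y = 0` of the normalized Bessel functions
`t ↦ t ^ (-ν) * J_ν t`, where `a = 2 ν + 1`. Differentiability at `0` is part of the notion, which
excludes the solutions that are singular there. -/
structure IsBesselSolution (a : ℝ) (y y' y'' : ℝ → ℝ) : Prop where
  hasDerivAt (t : ℝ) : HasDerivAt y (y' t) t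
  hasDerivAt_deriv (t : ℝ) : HasDerivAt y' (y'' t) t
  equation (t : ℝ) : t * y'' t + a * y' t + t * y t = 0

namespace IsBesselSolution

variable {a t : ℝ} {y y' y'' : ℝ → ℝ}

theorem continuous (hy : IsBesselSolution a y y' y'') : Continuous y :=
  continuous_iff_continuousAt.2 fun t => (hy.hasDerivAt t).continuousAt

theorem deriv_nonpos (hy : IsBesselSolution a y y' y'') (ha : 0 < a) (ht : 0 < t)
    (hpos : ∀ s ∈ Set.Ioo 0 t, 0 ≤ y s) : y' t ≤ 0 :=
  nonpos_of_mul_deriv_add_mul_nonpos ha hy.hasDerivAt_deriv ht fun s hs => by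
    linarith [hy.equation s, mul_nonneg hs.1.le (hpos s hs)]

theorem deriv_add_mul_nonpos (hy : IsBesselSolution a y y' y'') (ha : 0 < a) (ht : 0 < t)
    (hpos : ∀ s ∈ Set.Ioo 0 t, 0 ≤ y s) : y' t + t / (a + 1) * y t ≤ 0 := by
  have hderiv (s : ℝ) : HasDerivAt (fun s => y' s + s / (a + 1) * y s)
      (y'' s + (1 / (a + 1) * y s + s / (a + 1) * y' s)) s :=
    (hy.hasDerivAt_deriv s).add (((hasDerivAt_id s).div_const _).mul (hy.hasDerivAt s))
  refine nonpos_of_mul_deriv_add_mul_nonpos ha hderiv ht fun s hs => ?_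
  have hy's : y' s ≤ 0 :=
    hy.deriv_nonpos ha hs.1 fun u hu => hpos u ⟨hu.1, hu.2.trans hs.2⟩
  calc s * (y'' s + (1 / (a + 1) * y s + s / (a + 1) * y' s)) + a * (y' s + s / (a + 1) * y s)
      = s ^ 2 / (a + 1) * y' s + (s * y'' s + a * y' s + s * y s) := by field_simp; ring
    _ = s ^ 2 / (a + 1) * y' s := by rw [hy.equation, add_zero]
    _ ≤ 0 := mul_nonpos_of_nonneg_of_nonpos (by positivity) hy's

theorem le_mul_exp (hy : IsBesselSolution a y y' y'') (ha : 0 < a) (ht : 0 ≤ t)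
    (hpos : ∀ s ∈ Set.Icc 0 t, 0 ≤ y s) : y t ≤ y 0 * exp (-(t ^ 2 / (2 * (a + 1)))) := by
  have hexp (s : ℝ) : HasDerivAt (fun s => exp (s ^ 2 / (2 * (a + 1))))
      (exp (s ^ 2 / (2 * (a + 1))) * (s / (a + 1))) s :=
    (((hasDerivAt_pow 2 s).div_const _).exp).congr_deriv <| by
      rw [Nat.cast_ofNat, Nat.add_one_sub_one, pow_one]
      field_simp
  have hanti : AntitoneOn (fun s => y s * exp (s ^ 2 / (2 * (a + 1)))) (Set.Icc 0 t) := by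
    refine antitoneOn_of_hasDerivWithinAt_nonpos (convex_Icc 0 t)
      (f' := fun s => exp (s ^ 2 / (2 * (a + 1))) * (y' s + s / (a + 1) * y s))
      (hy.continuous.mul (by fun_prop)).continuousOn (fun s _ => ?_) fun s hs => ?_
    · exact (((hy.hasDerivAt s).mul (hexp s)).congr_deriv (by ring)).hasDerivWithinAt
    · rw [interior_Icc] at hs
      exact mul_nonpos_of_nonneg_of_nonpos (exp_nonneg _) <| hy.deriv_add_mul_nonpos ha hs.1
        fun u hu => hpos u ⟨hu.1.le, (hu.2.trans hs.2).le⟩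
  have hle := hanti (Set.left_mem_Icc.2 ht) (Set.right_mem_Icc.2 ht) ht
  rw [exp_neg, ← div_eq_mul_inv, le_div_iff₀ (exp_pos _)]
  simpa using hle

/-- Sturm comparison with the case `a = 2`, whose solution `sin t / t` is rescaled to have the same
second derivative at `0` as `y`. -/
theorem sturm_wronskian_nonneg (hy : IsBesselSolution a y y' y'') (ha : 2 ≤ a) {ω : ℝ}
    (hω : ω ^ 2 = 3 / (a + 1)) (ht : 0 ≤ t) (hpos : ∀ s ∈ Set.Ioo 0 t, 0 ≤ y s)
    (hsin : ∀ s ∈ Set.Ioo 0 t, 0 ≤ sin (ω * s)) :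
    0 ≤ (y t + t * y' t) * sin (ω * t) - t * y t * (ω * cos (ω * t)) := by
  have hs (s : ℝ) : HasDerivAt (fun s => sin (ω * s)) (ω * cos (ω * s)) s := by
    simpa [mul_comm] using ((hasDerivAt_id s).const_mul ω).sin
  have hc (s : ℝ) : HasDerivAt (fun s => ω * cos (ω * s)) (-(ω ^ 2 * sin (ω * s))) s :=
    (((hasDerivAt_id s).const_mul ω).cos.const_mul ω).congr_deriv <| by
      rw [id_eq]
      ring
  have hv (s : ℝ) : HasDerivAt (fun s => s * y s) (y s + s * y' s) s :=
    ((hasDerivAt_id s).mul (hy.hasDerivAt s)).congr_deriv (by simp)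
  have hv' (s : ℝ) : HasDerivAt (fun s => y s + s * y' s) (y' s + (y' s + s * y'' s)) s :=
    ((hy.hasDerivAt s).add ((hasDerivAt_id s).mul (hy.hasDerivAt_deriv s))).congr_deriv (by simp)
  have hW (s : ℝ) : HasDerivAt
      (fun s => (y s + s * y' s) * sin (ω * s) - s * y s * (ω * cos (ω * s)))
      (-(a - 2) * sin (ω * s) * (y' s + s / (a + 1) * y s)) s := by
    refine (((hv' s).mul (hs s)).sub ((hv s).mul (hc s))).congr_deriv ?_
    have hω' : ω ^ 2 = 1 - (a - 2) / (a + 1) := by rw [hω]; field_simp; ring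
    rw [hω']
    linear_combination sin (ω * s) * hy.equation s
  have hmono := monotoneOn_of_hasDerivWithinAt_nonneg (convex_Icc 0 t)
    (fun s _ => (hW s).continuousAt.continuousWithinAt) (fun s _ => (hW s).hasDerivWithinAt)
    fun s hs => by
      rw [interior_Icc] at hs
      refine mul_nonneg_of_nonpos_of_nonpos ?_ <| hy.deriv_add_mul_nonpos (by linarith) hs.1
        fun u hu => hpos u ⟨hu.1, hu.2.trans hs.2⟩
      nlinarith [hsin s hs]
  simpa using hmono (Set.left_mem_Icc.2 ht) (Set.right_mem_Icc.2 ht) ht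

theorem monotoneOn_mul_div_sin (hy : IsBesselSolution a y y' y'') (ha : 2 ≤ a) {ω : ℝ}
    (hω : ω ^ 2 = 3 / (a + 1)) (hpos : ∀ s ∈ Set.Ioo 0 t, 0 ≤ y s)
    (hsin : ∀ s ∈ Set.Ioc 0 t, 0 < sin (ω * s)) :
    MonotoneOn (fun s => s * y s / sin (ω * s)) (Set.Ioc 0 t) := by
  have hderiv {s : ℝ} (hs : s ∈ Set.Ioc 0 t) :
      HasDerivAt (fun s => s * y s / sin (ω * s)) (((y s + s * y' s) * sin (ω * s) -
        s * y s * (ω * cos (ω * s))) / sin (ω * s) ^ 2) s :=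
    (((hasDerivAt_id s).mul (hy.hasDerivAt s)).div ((hasDerivAt_id s).const_mul ω).sin
      (hsin s hs).ne').congr_deriv (by simp [mul_comm ω (cos _)])
  refine monotoneOn_of_hasDerivWithinAt_nonneg (convex_Ioc 0 t)
    (fun s hs => (hderiv hs).continuousAt.continuousWithinAt)
    (fun s hs => (hderiv (interior_subset hs)).hasDerivWithinAt) fun s hs => ?_
  have hs' : s ∈ Set.Ioc 0 t := interior_subset hs
  exact div_nonneg (hy.sturm_wronskian_nonneg ha hω hs'.1.le
    (fun u hu => hpos u ⟨hu.1, hu.2.trans_le hs'.2⟩)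
    fun u hu => (hsin u ⟨hu.1, hu.2.le.trans hs'.2⟩).le) (sq_nonneg _)

theorem pos_of_mul_lt_pi (hy : IsBesselSolution a y y' y'') (ha : 2 ≤ a) (h0 : 0 < y 0) {ω : ℝ}
    (hω0 : 0 < ω) (hω : ω ^ 2 = 3 / (a + 1)) (ht : 0 ≤ t) (htω : ω * t < π) : 0 < y t := by
  by_contra! hyt
  obtain ⟨T, ⟨hTt, hyT⟩, hTmin⟩ : ∃ T, IsLeast {s ∈ Set.Icc 0 t | y s ≤ 0} T :=
    (isCompact_Icc.inter_right (isClosed_le hy.continuous continuous_const)).exists_isLeast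
      ⟨t, Set.right_mem_Icc.2 ht, hyt⟩
  have hT : 0 < T := hTt.1.lt_of_ne (by rintro rfl; exact h0.not_ge hyT)
  have hpos (s : ℝ) (hs : s ∈ Set.Ioo 0 T) : 0 < y s :=
    lt_of_not_ge fun h => hs.2.not_ge (hTmin ⟨⟨hs.1.le, hs.2.le.trans hTt.2⟩, h⟩)
  have hsin (s : ℝ) (hs : s ∈ Set.Ioc 0 T) : 0 < sin (ω * s) :=
    sin_pos_of_pos_of_lt_pi (mul_pos hω0 hs.1) <|
      lt_of_le_of_lt (by gcongr; exact hs.2.trans hTt.2) htω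
  have hhalf : 0 < T / 2 := half_pos hT
  have hhT : T / 2 ≤ T := half_le_self hT.le
  have hle := hy.monotoneOn_mul_div_sin ha hω (fun s hs => (hpos s hs).le) hsin
    ⟨hhalf, hhT⟩ ⟨hT, le_rfl⟩ hhT
  have hlt : 0 < T / 2 * y (T / 2) / sin (ω * (T / 2)) :=
    div_pos (mul_pos hhalf (hpos _ ⟨hhalf, half_lt_self hT⟩)) (hsin _ ⟨hhalf, hhT⟩)
  exact (hlt.trans_le hle).not_ge (div_nonpos_of_nonpos_of_nonneg
    (mul_nonpos_of_nonneg_of_nonpos hT.le hyT) (hsin _ ⟨hT, le_rfl⟩).le)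

theorem nonneg_of_sq_le (hy : IsBesselSolution a y y' y'') (ha : 2 ≤ a) (h0 : 0 < y 0)
    (ht : 0 ≤ t) (hta : 3 * t ^ 2 ≤ (a + 1) * π ^ 2) : 0 ≤ y t := by
  have ha1 : 0 < a + 1 := by linarith
  set ω := √(3 / (a + 1))
  have hω0 : 0 < ω := sqrt_pos.2 (by positivity)
  have hω : ω ^ 2 = 3 / (a + 1) := sq_sqrt (by positivity)
  have htω : t ≤ π / ω := by
    rw [le_div_iff₀ hω0, ← sq_le_sq₀ (by positivity) pi_nonneg, mul_pow, hω, mul_div_assoc',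
      div_le_iff₀ ha1]
    linarith
  have hclosure : closure (Set.Ico 0 (π / ω)) = Set.Icc 0 (π / ω) :=
    closure_Ico (div_pos pi_pos hω0).ne
  refine le_on_closure (f := fun _ => 0) (s := Set.Ico 0 (π / ω)) (fun s hs => ?_)
    continuousOn_const hy.continuous.continuousOn (hclosure ▸ ⟨ht, htω⟩)
  exact (hy.pos_of_mul_lt_pi ha h0 hω0 hω hs.1 ((lt_div_iff₀' hω0).1 hs.2)).le

theorem abs_le_mul_exp (hy : IsBesselSolution a y y' y'') (ha : 2 ≤ a) (h0 : 0 < y 0)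
    (ht : 0 ≤ t) (hta : 3 * t ^ 2 ≤ (a + 1) * π ^ 2) :
    |y t| ≤ y 0 * exp (-(t ^ 2 / (2 * (a + 1)))) := by
  have hpos (s : ℝ) (hs : s ∈ Set.Icc 0 t) : 0 ≤ y s :=
    hy.nonneg_of_sq_le ha h0 hs.1 <| le_trans (by gcongr; exacts [hs.1, hs.2]) hta
  rw [abs_of_nonneg (hpos t (Set.right_mem_Icc.2 ht))]
  exact hy.le_mul_exp (by linarith) ht hpos

end IsBesselSolution

end BesselEquation

section PoissonIntegral

theorem hasDerivAt_integral_mul_comp_mul {w g g' : ℝ → ℝ} {a b C : ℝ} (hw : Continuous w)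
    (hg : ∀ t, HasDerivAt g (g' t) t) (hg' : Continuous g') (hC : ∀ t, |g' t| ≤ C) (t : ℝ) :
    HasDerivAt (fun t => ∫ u in a..b, w u * g (t * u)) (∫ u in a..b, w u * (u * g' (t * u))) t := by
  have hgc : Continuous g := continuous_iff_continuousAt.2 fun t => (hg t).continuousAt
  refine (intervalIntegral.hasDerivAt_integral_of_dominated_loc_of_deriv_le (s := Set.univ)
    (F' := fun t u => w u * (u * g' (t * u))) (bound := fun u => |w u| * (|u| * C))
    Filter.univ_mem ?_ ?_ ?_ ?_ ?_ ?_).2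
  · exact .of_forall fun t => Continuous.aestronglyMeasurable (by fun_prop)
  · exact Continuous.intervalIntegrable (by fun_prop) _ _
  · exact Continuous.aestronglyMeasurable (by fun_prop)
  · refine .of_forall fun u _ t _ => ?_
    rw [norm_eq_abs, abs_mul, abs_mul]
    gcongr
    exact hC _
  · exact Continuous.intervalIntegrable (by fun_prop) _ _
  · exact .of_forall fun u _ t _ => ((hg _).comp t ((hasDerivAt_id t).mul_const u)).const_mul _
      |>.congr_deriv (by simp [mul_comm])

/-- Poisson's integral for the Bessel function of order `ν = p + 1 / 2`: up to a constant factor,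
it is `t ^ (-ν) * J_ν t`. -/
noncomputable def besselPoissonIntegral (p t : ℝ) : ℝ :=
  ∫ u in (-1)..1, (1 - u ^ 2) ^ p * cos (t * u)

variable {p : ℝ}

theorem continuous_one_sub_sq_rpow (hp : 0 ≤ p) : Continuous fun u : ℝ => (1 - u ^ 2) ^ p :=
  (continuous_const.sub (continuous_pow 2)).rpow_const fun _ => Or.inr hp

/-- The equation holds because the integrands of its left-hand side add up to the `u`-derivative
of `(1 - u ^ 2) ^ (p + 1) * sin (t * u)`. -/
theorem isBesselSolution_besselPoissonIntegral (hp : 0 ≤ p) :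
    IsBesselSolution (2 * p + 2) (besselPoissonIntegral p)
      (fun t => ∫ u in (-1)..1, (1 - u ^ 2) ^ p * u * -sin (t * u))
      (fun t => ∫ u in (-1)..1, (1 - u ^ 2) ^ p * u * (u * -cos (t * u))) where
  hasDerivAt t := (hasDerivAt_integral_mul_comp_mul (continuous_one_sub_sq_rpow hp) hasDerivAt_cos
    continuous_sin.neg (fun t => by simpa using abs_sin_le_one t) t).congr_deriv
      (by simp only [mul_assoc])
  hasDerivAt_deriv t := hasDerivAt_integral_mul_comp_mul
    ((continuous_one_sub_sq_rpow hp).mul continuous_id) (fun t => (hasDerivAt_sin t).neg)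
    continuous_cos.neg (fun t => by simpa using abs_cos_le_one t) t
  equation t := by
    have := continuous_one_sub_sq_rpow hp
    have hint {f : ℝ → ℝ} (hf : Continuous f) :
        IntervalIntegrable f volume (-1) 1 := hf.intervalIntegrable _ _
    have hderiv (u : ℝ) (hu : u ∈ Set.uIcc (-1) 1) :
        HasDerivAt (fun u => (1 - u ^ 2) ^ (p + 1) * sin (t * u))
          (t * ((1 - u ^ 2) ^ p * u * (u * -cos (t * u))) +
            (2 * p + 2) * ((1 - u ^ 2) ^ p * u * -sin (t * u)) +
            t * ((1 - u ^ 2) ^ p * cos (t * u))) u := by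
      rw [Set.uIcc_of_le (by norm_num)] at hu
      have hbase : 0 ≤ 1 - u ^ 2 := by nlinarith [hu.1, hu.2]
      refine ((((hasDerivAt_pow 2 u).const_sub 1).rpow_const (Or.inr (by linarith))).mul
        ((hasDerivAt_id u).const_mul t).sin).congr_deriv ?_
      rw [add_sub_cancel_right, rpow_add_one' hbase (by linarith)]
      simp only [Nat.cast_ofNat, Nat.add_one_sub_one, pow_one, id_eq]
      ring
    rw [besselPoissonIntegral, ← intervalIntegral.integral_const_mul,
      ← intervalIntegral.integral_const_mul, ← intervalIntegral.integral_const_mul,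
      ← intervalIntegral.integral_add (hint (by fun_prop)) (hint (by fun_prop)),
      ← intervalIntegral.integral_add (hint (by fun_prop)) (hint (by fun_prop)),
      intervalIntegral.integral_eq_sub_of_hasDerivAt hderiv (hint (by fun_prop))]
    simp [zero_rpow (by linarith : p + 1 ≠ 0)]

theorem besselPoissonIntegral_zero_pos (hp : 0 ≤ p) : 0 < besselPoissonIntegral p 0 := by
  refine intervalIntegral.intervalIntegral_pos_of_pos_on ?_ (fun u hu => ?_) (by norm_num)
  · exact ((continuous_one_sub_sq_rpow hp).mul (by fun_prop)).intervalIntegrable _ _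
  · have : 0 < 1 - u ^ 2 := by nlinarith [hu.1, hu.2]
    simpa using rpow_pos_of_pos this p

theorem integral_one_sub_sq_rpow_smul_cexp (hp : 0 ≤ p) (t : ℝ) :
    ∫ u in (-1 : ℝ)..1, (1 - u ^ 2) ^ p • Complex.exp (-(t * u * Complex.I)) =
      besselPoissonIntegral p t := by
  set f : ℝ → ℂ := fun u => (1 - u ^ 2) ^ p • Complex.exp (-(t * u * Complex.I)) with hf
  have hfc : Continuous f := (continuous_one_sub_sq_rpow hp).smul (by fun_prop)
  have hreflect : ∫ u in (-1 : ℝ)..1, f (-u) = ∫ u in (-1 : ℝ)..1, f u := by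
    rw [intervalIntegral.integral_comp_neg, neg_neg]
  have hcos (u : ℝ) : f u + f (-u) = ((2 * ((1 - u ^ 2) ^ p * cos (t * u)) : ℝ) : ℂ) := by
    have h := Complex.two_cos (t * u)
    rw [neg_mul] at h
    simp only [hf, Complex.real_smul, neg_sq, Complex.ofReal_neg, mul_neg, neg_mul, neg_neg]
    push_cast
    linear_combination (-((1 - u ^ 2) ^ p : ℝ) : ℂ) * h
  have htwice : 2 * ∫ u in (-1 : ℝ)..1, f u = 2 * (besselPoissonIntegral p t : ℂ) := by
    rw [two_mul]
    nth_rw 2 [← hreflect]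
    rw [← intervalIntegral.integral_add (hfc.intervalIntegrable _ _)
      (Continuous.intervalIntegrable (by fun_prop) _ _)]
    simp only [hcos, intervalIntegral.integral_ofReal, intervalIntegral.integral_const_mul]
    simp [besselPoissonIntegral]
  exact mul_left_cancel₀ two_ne_zero htwice

theorem abs_besselPoissonIntegral_le (hp : 0 ≤ p) {t : ℝ} (ht : 0 ≤ t)
    (htp : 3 * t ^ 2 ≤ (2 * p + 3) * π ^ 2) :
    |besselPoissonIntegral p t| ≤
      besselPoissonIntegral p 0 * exp (-(t ^ 2 / (2 * (2 * p + 3)))) := by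
  have h := (isBesselSolution_besselPoissonIntegral hp).abs_le_mul_exp (by linarith)
    (besselPoissonIntegral_zero_pos hp) ht
  rw [show 2 * p + 2 + 1 = 2 * p + 3 by ring] at h
  exact h htp

end PoissonIntegral

section Slicing

variable {E F G : Type*} [NormedAddCommGroup F]

theorem toLp_preimage_closedBall_slice (u : ℝ) :
    {y : F | WithLp.toLp 2 (u, y) ∈ Metric.closedBall (0 : WithLp 2 (ℝ × F)) 1} =
      if u ∈ Set.Icc (-1) 1 then Metric.closedBall 0 √(1 - u ^ 2) else ∅ := by
  ext y
  have hnorm : WithLp.toLp 2 (u, y) ∈ Metric.closedBall (0 : WithLp 2 (ℝ × F)) 1 ↔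
      ‖y‖ ^ 2 ≤ 1 - u ^ 2 := by
    rw [mem_closedBall_zero_iff, ← sq_le_one_iff₀ (norm_nonneg _), WithLp.prod_norm_sq_eq_of_L2]
    simp [le_sub_iff_add_le']
  rw [Set.mem_ofPred_eq, hnorm]
  split_ifs with hu
  · have hbase : 0 ≤ 1 - u ^ 2 := by nlinarith [hu.1, hu.2]
    rw [mem_closedBall_zero_iff, le_sqrt (norm_nonneg y) hbase]
  · simp only [Set.mem_empty_iff_false, iff_false]
    intro h
    exact hu (abs_le.1 <| (sq_le_one_iff_abs_le_one u).1 <| by linarith [sq_nonneg ‖y‖])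

variable [NormedAddCommGroup E] [InnerProductSpace ℝ E] [InnerProductSpace ℝ F]
  [NormedAddCommGroup G] [NormedSpace ℝ G]

theorem exists_linearIsometryEquiv_fst_eq_inner {e : E} (he : ‖e‖ = 1) :
    ∃ Φ : E ≃ₗᵢ[ℝ] WithLp 2 (ℝ × (ℝ ∙ e)ᗮ), ∀ x, (Φ x).fst = ⟪e, x⟫ := by
  refine ⟨(ℝ ∙ e).orthogonalDecomposition.trans <| LinearIsometryEquiv.withLpProdCongr 2
    (LinearIsometryEquiv.toSpanUnitSingleton e he).symm (LinearIsometryEquiv.refl ℝ _),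
    fun x => ?_⟩
  suffices (LinearIsometryEquiv.toSpanUnitSingleton e he).symm
      ((ℝ ∙ e).orthogonalProjectionOnto x) = ⟪e, x⟫ by simpa
  rw [LinearIsometryEquiv.symm_apply_eq, LinearIsometryEquiv.toSpanUnitSingleton_apply]
  exact Subtype.ext (Submodule.starProjection_unit_singleton ℝ he x)

variable [FiniteDimensional ℝ E] [MeasurableSpace E] [BorelSpace E] [FiniteDimensional ℝ F]
  [MeasurableSpace F] [BorelSpace F] [CompleteSpace G]

theorem setIntegral_closedBall_comp_fst {h : ℝ → G} (hh : Continuous h) :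
    ∫ z in Metric.closedBall (0 : WithLp 2 (ℝ × F)) 1, h z.fst =
      ∫ u in (-1)..1, volume.real (Metric.closedBall (0 : F) √(1 - u ^ 2)) • h u := by
  set S : Set (ℝ × F) := WithLp.toLp 2 ⁻¹' Metric.closedBall 0 1
  have hemb : MeasurableEmbedding (WithLp.toLp 2 : ℝ × F → WithLp 2 (ℝ × F)) :=
    (MeasurableEquiv.toLp 2 _).measurableEmbedding
  have hS : MeasurableSet S := hemb.measurable measurableSet_closedBall
  have hint : IntegrableOn (fun q : ℝ × F => h q.1) S :=
    ((WithLp.volume_preserving_toLp ℝ F).integrableOn_comp_preimage hemb).2 <|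
      ContinuousOn.integrableOn_compact (f := fun z : WithLp 2 (ℝ × F) => h z.fst)
        (isCompact_closedBall 0 1) (by fun_prop)
  have hslice (u : ℝ) : ∫ y, S.indicator (fun q => h q.1) (u, y) =
      (Set.Icc (-1) 1).indicator
        (fun u => volume.real (Metric.closedBall (0 : F) √(1 - u ^ 2)) • h u) u := by
    have hmeas : MeasurableSet {y : F | (u, y) ∈ S} := measurable_prodMk_left hS
    calc ∫ y, S.indicator (fun q => h q.1) (u, y)
        = ∫ _ in {y : F | (u, y) ∈ S}, h u := by
          rw [← integral_indicator hmeas]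
          rfl
      _ = _ := by
          rw [setIntegral_const, Set.indicator_apply]
          simp only [S, Set.mem_preimage, toLp_preimage_closedBall_slice]
          split_ifs <;> simp
  calc ∫ z in Metric.closedBall (0 : WithLp 2 (ℝ × F)) 1, h z.fst
      = ∫ q in S, h q.1 :=
        ((WithLp.volume_preserving_toLp ℝ F).setIntegral_preimage_emb hemb _ _).symm
    _ = ∫ u, ∫ y, S.indicator (fun q => h q.1) (u, y) := by
        rw [← integral_indicator hS, Measure.volume_eq_prod,
          integral_prod _ ((integrable_indicator_iff hS).2 hint)]
    _ = _ := by
        simp only [hslice]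
        rw [integral_indicator measurableSet_Icc, integral_Icc_eq_integral_Ioc,
          intervalIntegral.integral_of_le (by norm_num)]

theorem setIntegral_closedBall_comp_inner {e : E} (he : ‖e‖ = 1) {h : ℝ → G} (hh : Continuous h) :
    ∫ x in Metric.closedBall (0 : E) 1, h ⟪e, x⟫ =
      volume.real (Metric.closedBall (0 : (ℝ ∙ e)ᗮ) 1) •
        ∫ u in (-1)..1, (1 - u ^ 2) ^ (((Module.finrank ℝ E : ℝ) - 1) / 2) • h u := by
  obtain ⟨Φ, hΦ⟩ := exists_linearIsometryEquiv_fst_eq_inner he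
  have hrank : Module.finrank ℝ (ℝ ∙ e)ᗮ = (Module.finrank ℝ E : ℝ) - 1 := by
    rw [← (ℝ ∙ e).finrank_add_finrank_orthogonal,
      finrank_span_singleton (norm_ne_zero_iff.1 (he.trans_ne one_ne_zero))]
    push_cast
    ring
  calc ∫ x in Metric.closedBall (0 : E) 1, h ⟪e, x⟫
      = ∫ z in Metric.closedBall (0 : WithLp 2 (ℝ × (ℝ ∙ e)ᗮ)) 1, h z.fst := by
        rw [← Φ.measurePreserving.setIntegral_preimage_emb
          Φ.toHomeomorph.measurableEmbedding, Φ.preimage_closedBall, map_zero]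
        simp only [hΦ]
    _ = ∫ u in (-1)..1, volume.real (Metric.closedBall (0 : (ℝ ∙ e)ᗮ) √(1 - u ^ 2)) • h u :=
        setIntegral_closedBall_comp_fst hh
    _ = _ := by
        rw [← intervalIntegral.integral_smul]
        refine intervalIntegral.integral_congr fun u hu => ?_
        rw [Set.uIcc_of_le (by norm_num)] at hu
        have hbase : 0 ≤ 1 - u ^ 2 := by nlinarith [hu.1, hu.2]
        rw [Measure.addHaar_real_closedBall' _ _ (sqrt_nonneg _), smul_smul, mul_comm, ← hrank,
          rpow_div_two_eq_sqrt _ hbase, rpow_natCast]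

end Slicing

section FourierBall

open scoped Pointwise

theorem exists_norm_eq_one_and_eq_norm_smul {E : Type*} [NormedAddCommGroup E]
    [NormedSpace ℝ E] [Nontrivial E] (ζ : E) :
    ∃ e : E, ‖e‖ = 1 ∧ ζ = ‖ζ‖ • e := by
  rcases eq_or_ne ζ 0 with rfl | hζ
  · obtain ⟨e, he⟩ := exists_norm_eq E zero_le_one
    exact ⟨e, he, by simp⟩
  · exact ⟨‖ζ‖⁻¹ • ζ, norm_smul_inv_norm hζ, (smul_inv_smul₀ (norm_ne_zero_iff.2 hζ) ζ).symm⟩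

variable {E : Type*} [NormedAddCommGroup E] [InnerProductSpace ℝ E] [FiniteDimensional ℝ E]

theorem finrank_sub_one_div_two_nonneg {e : E} (he : ‖e‖ = 1) :
    0 ≤ ((Module.finrank ℝ E : ℝ) - 1) / 2 := by
  have : Nontrivial E := ⟨e, 0, norm_ne_zero_iff.1 (he.trans_ne one_ne_zero)⟩
  have : (1 : ℝ) ≤ Module.finrank ℝ E := by exact_mod_cast Module.finrank_pos (R := ℝ) (M := E)
  linarith

variable [MeasurableSpace E] [BorelSpace E]

theorem setIntegral_unitBall_cexp_inner {e : E} (he : ‖e‖ = 1) (t : ℝ) :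
    ∫ x in Metric.closedBall (0 : E) 1, Complex.exp (-(t * ⟪e, x⟫ * Complex.I)) =
      (volume.real (Metric.closedBall (0 : (ℝ ∙ e)ᗮ) 1) *
        besselPoissonIntegral ((Module.finrank ℝ E - 1) / 2) t : ℝ) := by
  rw [setIntegral_closedBall_comp_inner he
    (h := fun u => Complex.exp (-(t * u * Complex.I))) (by fun_prop),
    integral_one_sub_sq_rpow_smul_cexp (finrank_sub_one_div_two_nonneg he), Complex.real_smul,
    Complex.ofReal_mul]

theorem norm_setIntegral_unitBall_cexp_inner_le {e : E} (he : ‖e‖ = 1) {t : ℝ} (ht : 0 ≤ t)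
    (htE : 3 * t ^ 2 ≤ (Module.finrank ℝ E + 2) * π ^ 2) :
    ‖∫ x in Metric.closedBall (0 : E) 1, Complex.exp (-(t * ⟪e, x⟫ * Complex.I))‖ ≤
      volume.real (Metric.closedBall (0 : E) 1) *
        exp (-(t ^ 2 / (2 * (Module.finrank ℝ E + 2)))) := by
  set p : ℝ := (Module.finrank ℝ E - 1) / 2 with hp
  have hpE : 2 * p + 3 = Module.finrank ℝ E + 2 := by rw [hp]; ring
  have hvol : volume.real (Metric.closedBall (0 : E) 1) =
      volume.real (Metric.closedBall (0 : (ℝ ∙ e)ᗮ) 1) * besselPoissonIntegral p 0 := by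
    have h := setIntegral_unitBall_cexp_inner he 0
    simp only [Complex.ofReal_zero, zero_mul, neg_zero, Complex.exp_zero, setIntegral_const,
      Complex.real_smul, mul_one] at h
    exact Complex.ofReal_injective h
  rw [setIntegral_unitBall_cexp_inner he, Complex.norm_real, norm_mul, norm_eq_abs, norm_eq_abs,
    abs_of_nonneg measureReal_nonneg, hvol, mul_assoc, ← hpE]
  gcongr
  exact abs_besselPoissonIntegral_le (finrank_sub_one_div_two_nonneg he) ht (hpE ▸ htE)

theorem norm_setIntegral_closedBall_cexp_inner_le [Nontrivial E] {r : ℝ} (hr : 0 < r) (ζ : E)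
    (hrζ : 12 * (r * ‖ζ‖) ^ 2 ≤ Module.finrank ℝ E + 2) :
    ‖∫ x in Metric.closedBall (0 : E) r,
        Complex.exp (-(2 * (π : ℂ) * Complex.I) * (⟪x, ζ⟫ : ℝ))‖ ≤
      volume.real (Metric.closedBall (0 : E) r) *
        exp (-(2 * (π * r) ^ 2 / (Module.finrank ℝ E + 2)) * ‖ζ‖ ^ 2) := by
  obtain ⟨e, he, hζ⟩ : ∃ e : E, ‖e‖ = 1 ∧ ζ = ‖ζ‖ • e := exists_norm_eq_one_and_eq_norm_smul ζ
  set d := Module.finrank ℝ E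
  have hball : r • Metric.closedBall (0 : E) 1 = Metric.closedBall 0 r := by
    rw [smul_unitClosedBall, norm_eq_abs, abs_of_pos hr]
  have hscale : ∫ x in Metric.closedBall (0 : E) r,
      Complex.exp (-(2 * (π : ℂ) * Complex.I) * (⟪x, ζ⟫ : ℝ)) =
        r ^ d • ∫ x in Metric.closedBall (0 : E) 1,
          Complex.exp (-((2 * π * (r * ‖ζ‖) : ℝ) * ⟪e, x⟫ * Complex.I)) := by
    have h := Measure.setIntegral_comp_smul_of_pos volume
      (fun x : E => Complex.exp (-(2 * (π : ℂ) * Complex.I) * (⟪x, ζ⟫ : ℝ)))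
      (Metric.closedBall 0 1) hr
    rw [hball, eq_inv_smul_iff₀ (pow_pos hr _).ne'] at h
    rw [← h]
    congr! 4 with x
    nth_rw 1 [hζ]
    rw [real_inner_smul_left, real_inner_smul_right, real_inner_comm]
    push_cast
    ring
  have hbound := norm_setIntegral_unitBall_cexp_inner_le he
    (t := 2 * π * (r * ‖ζ‖)) (by positivity) (by nlinarith [sq_nonneg π])
  rw [hscale, norm_smul, norm_pow, norm_eq_abs, abs_of_pos hr,
    Measure.addHaar_real_closedBall' _ _ hr.le, mul_assoc (r ^ d)]
  refine mul_le_mul_of_nonneg_left (hbound.trans_eq ?_) (pow_nonneg hr.le _)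
  congr 2
  field_simp
  ring

end FourierBall

section UnitVolumeRadius

theorem Gamma_nat_add_two_div_two_add_one (N : ℕ) :
    Gamma (((N + 2 : ℕ) : ℝ) / 2 + 1) = ((N : ℝ) + 2) / 2 * Gamma ((N : ℝ) / 2 + 1) := by
  rw [Nat.cast_add, Nat.cast_ofNat, add_div, div_self two_ne_zero, Gamma_add_one (by positivity)]

theorem sq_Gamma_one_half_add_one : Gamma (1 / 2 + 1) ^ 2 = π / 4 := by
  rw [Gamma_add_one (by norm_num), Gamma_one_half_eq, mul_pow, sq_sqrt pi_nonneg]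
  ring

theorem pi_div_four_pow_le_sq_Gamma (N : ℕ) : (π / 4) ^ N ≤ Gamma ((N : ℝ) / 2 + 1) ^ 2 := by
  induction N using Nat.twoStepInduction with
  | zero => simp
  | one => rw [Nat.cast_one, sq_Gamma_one_half_add_one, pow_one]
  | more N ih _ =>
    have hN : π / 4 ≤ (N + 2) / 2 := by linarith [pi_lt_four, (N.cast_nonneg : (0 : ℝ) ≤ N)]
    rw [Gamma_nat_add_two_div_two_add_one, mul_pow, pow_add, mul_comm]
    exact mul_le_mul (pow_le_pow_left₀ (by positivity) hN 2) ih (by positivity) (by positivity)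

theorem four_le_one_add_two_div_pow {m : ℕ} (hm : 2 ≤ m) : (4 : ℝ) ≤ (1 + 2 / m) ^ m := by
  have hm' : (2 : ℝ) ≤ m := by exact_mod_cast hm
  have hbernoulli : (2 : ℝ) ≤ (1 + 2 / m) ^ ((m : ℝ) / 2) := by
    have h := one_add_mul_self_le_rpow_one_add (s := 2 / m) (p := m / 2)
      (by linarith [show (0 : ℝ) ≤ 2 / m by positivity]) (by linarith)
    rwa [div_mul_div_cancel₀ two_ne_zero, div_self (by positivity), one_add_one_eq_two] at h
  calc (4 : ℝ) = 2 ^ 2 := by norm_num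
    _ ≤ ((1 + 2 / m) ^ ((m : ℝ) / 2)) ^ 2 := by gcongr
    _ = (1 + 2 / m) ^ m := by
      rw [← rpow_mul_natCast (by positivity), Nat.cast_ofNat, div_mul_cancel₀ _ two_ne_zero,
        rpow_natCast]

theorem sq_Gamma_le_pow (N : ℕ) : Gamma ((N : ℝ) / 2 + 1) ^ 2 ≤ (π * (N + 2) / 12) ^ N := by
  induction N using Nat.twoStepInduction with
  | zero => simp
  | one =>
    rw [Nat.cast_one, sq_Gamma_one_half_add_one]
    apply le_of_eq
    ring
  | more N ih _ =>
    have hpi : (9 : ℝ) ≤ π ^ 2 := by nlinarith [pi_gt_three]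
    calc Gamma (((N + 2 : ℕ) : ℝ) / 2 + 1) ^ 2
        = ((N + 2) / 2) ^ 2 * Gamma ((N : ℝ) / 2 + 1) ^ 2 := by
          rw [Gamma_nat_add_two_div_two_add_one, mul_pow]
      _ ≤ π ^ 2 / 9 * ((N + 2) / 2) ^ 2 * (π * (N + 2) / 12) ^ N := by
          gcongr
          exact le_mul_of_one_le_left (by positivity) (by linarith)
      _ = (π * (N + 2) / 12) ^ (N + 2) * 4 := by ring
      _ ≤ (π * (N + 2) / 12) ^ (N + 2) * (1 + 2 / (N + 2 : ℕ)) ^ (N + 2) := by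
          gcongr
          exact four_le_one_add_two_div_pow le_add_self
      _ = (π * ((N + 2 : ℕ) + 2) / 12) ^ (N + 2) := by
          rw [← mul_pow]
          congr 1
          push_cast
          field_simp

variable {N : ℕ} {r : ℝ}

theorem volume_real_closedBall_eq_one_iff (hN : N ≠ 0) (hr : 0 ≤ r) :
    volume.real (Metric.closedBall (0 : EuclideanSpace ℝ (Fin N)) r) = 1 ↔
      (√π * r) ^ N = Gamma ((N : ℝ) / 2 + 1) := by
  have : Nonempty (Fin N) := ⟨⟨0, Nat.pos_of_ne_zero hN⟩⟩
  have hG : 0 < Gamma ((N : ℝ) / 2 + 1) := Gamma_pos_of_pos (by positivity)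
  rw [measureReal_def, EuclideanSpace.volume_closedBall, Fintype.card_fin,
    ← ENNReal.ofReal_pow hr, ← ENNReal.ofReal_mul (by positivity),
    ENNReal.toReal_ofReal (by positivity), ← mul_div_assoc, ← mul_pow, mul_comm r,
    div_eq_one_iff_eq hG.ne']

theorem pi_mul_sq_pow_eq_sq_Gamma (hN : N ≠ 0) (hr : 0 ≤ r)
    (hvol : volume.real (Metric.closedBall (0 : EuclideanSpace ℝ (Fin N)) r) = 1) :
    (π * r ^ 2) ^ N = Gamma ((N : ℝ) / 2 + 1) ^ 2 := by
  rw [← (volume_real_closedBall_eq_one_iff hN hr).1 hvol, ← pow_mul, mul_comm N, pow_mul,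
    mul_pow √π, sq_sqrt pi_nonneg]

theorem half_le_of_volume_closedBall_eq_one (hN : N ≠ 0) (hr : 0 ≤ r)
    (hvol : volume.real (Metric.closedBall (0 : EuclideanSpace ℝ (Fin N)) r) = 1) :
    1 / 2 ≤ r := by
  have hpow : π / 4 ≤ π * r ^ 2 := le_of_pow_le_pow_left₀ hN (by positivity) <|
    (pi_div_four_pow_le_sq_Gamma N).trans_eq (pi_mul_sq_pow_eq_sq_Gamma hN hr hvol).symm
  rw [← sq_le_sq₀ (by norm_num) hr]
  exact le_of_mul_le_mul_left (by linarith) pi_pos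

theorem twelve_mul_sq_le_of_volume_closedBall_eq_one (hN : N ≠ 0) (hr : 0 ≤ r)
    (hvol : volume.real (Metric.closedBall (0 : EuclideanSpace ℝ (Fin N)) r) = 1) :
    12 * r ^ 2 ≤ N + 2 := by
  have hpow : π * r ^ 2 ≤ π * (N + 2) / 12 := le_of_pow_le_pow_left₀ hN (by positivity) <|
    (pi_mul_sq_pow_eq_sq_Gamma hN hr hvol).trans_le (sq_Gamma_le_pow N)
  exact le_of_mul_le_mul_left (by linarith) pi_pos

theorem pi_mul_div_lt_of_half_le (hN : 1 ≤ N) (hr : 1 / 2 ≤ r) :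
    π * r / N < 2 * (π * r) ^ 2 / (N + 2) := by
  have hN1 : (1 : ℝ) ≤ N := by exact_mod_cast hN
  have hpi : 3 < 2 * (π * r) := by nlinarith [pi_gt_three]
  have hlt : (N : ℝ) + 2 < 2 * (π * r) * N := by nlinarith
  rw [div_lt_div_iff₀ (by positivity) (by positivity)]
  calc π * r * (N + 2) < π * r * (2 * (π * r) * N) := by gcongr
    _ = 2 * (π * r) ^ 2 * N := by ring

end UnitVolumeRadius

/-- Gaussian upper bound on the unit ball for the Fourier transform of the indicator of the
unit-volume Euclidean ball in `ℝ^N`: there exists `c > π r_N / N` such that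
`|χ̂_B(ζ)| ≤ e^{-c|ζ|²}` for all `|ζ| ≤ 1`. -/
theorem fourier_ball_gaussian_bound (N : ℕ) (hN : 1 ≤ N)
    (rN : ℝ) (hrN : rN = (π : ℝ) ^ (-(1:ℝ)/2) * (Real.Gamma ((N:ℝ)/2 + 1)) ^ ((1:ℝ)/N)) :
    ∃ c : ℝ, π * rN / N < c ∧
      ∀ ζ : EuclideanSpace ℝ (Fin N), ‖ζ‖ ≤ 1 →
        ‖∫ x in Metric.closedBall (0 : EuclideanSpace ℝ (Fin N)) rN,
            Complex.exp (-(2 * (π:ℂ) * Complex.I) * (⟪x, ζ⟫ : ℝ))‖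
          ≤ Real.exp (-c * ‖ζ‖ ^ 2) := by
  have hN0 : N ≠ 0 := Nat.one_le_iff_ne_zero.1 hN
  have hG : 0 < Gamma ((N : ℝ) / 2 + 1) := Gamma_pos_of_pos (by positivity)
  have hr : 0 < rN := by rw [hrN]; positivity
  have hvol : volume.real (Metric.closedBall (0 : EuclideanSpace ℝ (Fin N)) rN) = 1 := by
    have hpi : √π * π ^ (-(1 : ℝ) / 2) = 1 := by
      rw [sqrt_eq_rpow, ← rpow_add pi_pos]
      norm_num
    rw [volume_real_closedBall_eq_one_iff hN0 hr.le, hrN, ← mul_assoc, hpi, one_mul, one_div,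
      rpow_inv_natCast_pow hG.le hN0]
  refine ⟨2 * (π * rN) ^ 2 / (N + 2), ?_, fun ζ hζ => ?_⟩
  · exact pi_mul_div_lt_of_half_le hN (half_le_of_volume_closedBall_eq_one hN0 hr.le hvol)
  · have : Nonempty (Fin N) := ⟨⟨0, hN⟩⟩
    have hrζ : 12 * (rN * ‖ζ‖) ^ 2 ≤ N + 2 := by
      refine le_trans ?_ (twelve_mul_sq_le_of_volume_closedBall_eq_one hN0 hr.le hvol)
      gcongr
      exact mul_le_of_le_one_right hr.le hζ
    simpa [hvol] using norm_setIntegral_closedBall_cexp_inner_le hr ζ (by simpa using hrζ)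
end

section
/- Let m̃ be the Fourier transform of the unit-mass surface measure of the sphere of radius R in ℝ^N, N ≥ 3. If α ≥ 1 and 2πR|ζ| < 1, then there exists C' < 1 (depending on N, α) such that for all 1 ≤ r ≤ 2, |(d/dr)^α m̃(rζ)| ≤ C' (2πR|ζ|)². -/
open MeasureTheory Real intervalIntegral

/-- The Fourier transform of the unit-mass surface measure of the sphere of radius `R`
in `ℝ^N`, given by `m̃(ζ) = (Γ(N/2)/(Γ((N-1)/2)√π)) ∫_{-1}^1 e^{2πiR|ζ|t}(1-t²)^{(N-3)/2} dt`. -/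
noncomputable def sphereFT (N : ℕ) (R : ℝ) (ζ : EuclideanSpace ℝ (Fin N)) : ℂ :=
  ((Real.Gamma ((N:ℝ)/2) / (Real.Gamma (((N:ℝ) - 1)/2) * Real.sqrt π)) : ℝ) *
    ∫ t in (-1:ℝ)..1,
      Complex.exp (2 * (π:ℂ) * Complex.I * (R * ‖ζ‖ * t : ℝ)) *
        ((1 - t^2 : ℝ) ^ (((N:ℝ) - 3)/2) : ℝ)

/-! The integral defining `sphereFT` is the characteristic function of a symmetric probability
measure on `[-1, 1]`, the law of one coordinate of a uniform point of the unit sphere, evaluated at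
`a = 2πR|ζ|`. Its variance is `1/N` by a Beta integral. Derivatives of a characteristic function are
bounded by absolute moments; on `[-1, 1]` those of order at least two are at most the variance,
while the first derivative vanishes at the origin because the mean does, so it is bounded by the
variance times the argument. Rescaling by `a ≤ 1` gives `max 1 |r| / N * a²` in every order. -/

section CharFun

variable {μ : Measure ℝ} [IsFiniteMeasure μ]

lemma norm_iteratedDeriv_charFun_le {n : ℕ} (hμ : MemLp id n μ) (t : ℝ) :
    ‖iteratedDeriv n (charFun μ) t‖ ≤ ∫ x, |x| ^ n ∂μ := by
  rw [iteratedDeriv_charFun hμ, norm_mul, norm_pow, Complex.norm_I, one_pow, one_mul]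
  refine (MeasureTheory.norm_integral_le_integral_norm _).trans_eq ?_
  congr 1 with x
  simp only [← Complex.ofReal_mul, norm_mul, norm_pow, Complex.norm_real,
    Complex.norm_exp_ofReal_mul_I, Real.norm_eq_abs, mul_one]

lemma norm_deriv_charFun_le (hμ : MemLp id 2 μ) (hmean : ∫ x, x ∂μ = 0) (t : ℝ) :
    ‖deriv (charFun μ) t‖ ≤ (∫ x, x ^ 2 ∂μ) * |t| := by
  have hderiv_zero : deriv (charFun μ) 0 = 0 := by
    have hμ1 : MemLp id (1 : ℕ) μ := hμ.mono_exponent (by norm_num)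
    rw [← iteratedDeriv_one, iteratedDeriv_charFun_zero hμ1]
    simp only [pow_one, hmean, Complex.ofReal_zero, mul_zero]
  have hderiv2 (x : ℝ) : ‖deriv (deriv (charFun μ)) x‖ ≤ ∫ x, x ^ 2 ∂μ := by
    simpa only [iteratedDeriv_succ, iteratedDeriv_zero, sq_abs] using
      norm_iteratedDeriv_charFun_le (n := 2) hμ x
  have hdiff : Differentiable ℝ (deriv (charFun μ)) := by
    rw [← iteratedDeriv_one]
    exact (contDiff_charFun (n := 2) hμ).differentiable_iteratedDeriv 1 (by norm_num)
  simpa only [hderiv_zero, sub_zero, Real.norm_eq_abs] using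
    convex_univ.norm_image_sub_le_of_norm_deriv_le (fun x _ => hdiff x) (fun x _ => hderiv2 x)
      (Set.mem_univ 0) (Set.mem_univ t)

lemma memLp_id_of_ae_abs_le {C : ℝ} (hμ : ∀ᵐ x ∂μ, |x| ≤ C) (p : ENNReal) : MemLp id p μ :=
  .of_bound measurable_id.aestronglyMeasurable C hμ

lemma norm_iteratedDeriv_charFun_le_integral_sq (hμ : ∀ᵐ x ∂μ, |x| ≤ 1) {n : ℕ} (hn : 2 ≤ n)
    (t : ℝ) : ‖iteratedDeriv n (charFun μ) t‖ ≤ ∫ x, x ^ 2 ∂μ := by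
  refine (norm_iteratedDeriv_charFun_le (memLp_id_of_ae_abs_le hμ n) t).trans ?_
  refine integral_mono_of_nonneg (.of_forall fun x => by positivity)
    (memLp_id_of_ae_abs_le hμ 2).integrable_sq ?_
  filter_upwards [hμ] with x hx
  exact (pow_le_pow_of_le_one (abs_nonneg x) hx hn).trans_eq (sq_abs x)

lemma norm_iteratedDeriv_charFun_const_mul_le (hμ : ∀ᵐ x ∂μ, |x| ≤ 1) (hmean : ∫ x, x ∂μ = 0)
    {n : ℕ} (hn : 1 ≤ n) {a : ℝ} (ha : |a| ≤ 1) (r : ℝ) :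
    ‖iteratedDeriv n (fun s => charFun μ (a * s)) r‖ ≤
      max 1 |r| * (∫ x, x ^ 2 ∂μ) * a ^ 2 := by
  have : 0 ≤ ∫ x, x ^ 2 ∂μ := integral_nonneg fun x => sq_nonneg x
  rw [iteratedDeriv_comp_const_smul (contDiff_charFun (memLp_id_of_ae_abs_le hμ n)),
    norm_smul, norm_pow, Real.norm_eq_abs, ← sq_abs a]
  rcases hn.eq_or_lt with rfl | hn2
  · rw [iteratedDeriv_one, pow_one]
    calc |a| * ‖deriv (charFun μ) (a * r)‖
        ≤ |a| * ((∫ x, x ^ 2 ∂μ) * |a * r|) := by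
          gcongr
          exact norm_deriv_charFun_le (memLp_id_of_ae_abs_le hμ 2) hmean _
      _ = |r| * (∫ x, x ^ 2 ∂μ) * |a| ^ 2 := by rw [abs_mul]; ring
      _ ≤ max 1 |r| * (∫ x, x ^ 2 ∂μ) * |a| ^ 2 := by gcongr; exact le_max_right _ _
  · calc |a| ^ n * ‖iteratedDeriv n (charFun μ) (a * r)‖
        ≤ |a| ^ 2 * ∫ x, x ^ 2 ∂μ := by
          gcongr ?_ * ?_
          · exact pow_le_pow_of_le_one (abs_nonneg a) ha hn2
          · exact norm_iteratedDeriv_charFun_le_integral_sq hμ hn2 _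
      _ = 1 * (∫ x, x ^ 2 ∂μ) * |a| ^ 2 := by ring
      _ ≤ max 1 |r| * (∫ x, x ^ 2 ∂μ) * |a| ^ 2 := by gcongr; exact le_max_left _ _

end CharFun

open ProbabilityTheory (beta beta_pos beta_eq_betaIntegralReal)

section BetaIntegral

lemma integral_rpow_mul_one_sub_rpow {u v : ℝ} (hu : 0 < u) (hv : 0 < v) :
    ∫ x in (0 : ℝ)..1, x ^ (u - 1) * (1 - x) ^ (v - 1) = beta u v := by
  have hcast : Complex.betaIntegral u v =
      ((∫ x in (0 : ℝ)..1, x ^ (u - 1) * (1 - x) ^ (v - 1) : ℝ) : ℂ) := by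
    rw [Complex.betaIntegral, ← intervalIntegral.integral_ofReal]
    refine integral_congr fun x hx => ?_
    rw [Set.uIcc_of_le zero_le_one] at hx
    simp only [Complex.ofReal_mul, Complex.ofReal_cpow hx.1,
      Complex.ofReal_cpow (sub_nonneg.2 hx.2), Complex.ofReal_sub, Complex.ofReal_one]
  rw [beta_eq_betaIntegralReal u v hu hv, hcast, Complex.ofReal_re]

lemma integral_comp_sq (f : ℝ → ℝ) :
    ∫ x, f (x ^ 2) = ∫ u in Set.Ioi 0, u ^ (-1 / 2 : ℝ) * f u := by
  have habs := _root_.integral_comp_abs (f := fun x => f (x ^ 2))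
  simp only [sq_abs] at habs
  rw [← integral_comp_rpow_Ioi_of_pos (g := fun u => u ^ (-1 / 2 : ℝ) * f u) two_pos]
  refine habs.trans ?_
  rw [← MeasureTheory.integral_const_mul]
  refine setIntegral_congr_fun measurableSet_Ioi fun x (hx : 0 < x) => ?_
  have hroot : (x ^ (2 : ℝ)) ^ (-1 / 2 : ℝ) = x⁻¹ := by
    rw [← Real.rpow_mul hx.le]
    norm_num [Real.rpow_neg_one]
  have hlin : x ^ ((2 : ℝ) - 1) = x := by norm_num
  simp only [hroot, hlin, smul_eq_mul]
  rw [Real.rpow_two]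
  field_simp

lemma intervalIntegral_comp_sq (f : ℝ → ℝ) {a : ℝ} (ha : 0 ≤ a) :
    ∫ x in -a..a, f (x ^ 2) = ∫ u in (0 : ℝ)..a ^ 2, u ^ (-1 / 2 : ℝ) * f u := by
  rw [integral_of_le (neg_le_self ha), integral_of_le (sq_nonneg a), ← integral_Icc_eq_integral_Ioc,
    ← MeasureTheory.integral_indicator measurableSet_Icc, ← Set.Ioi_inter_Iic,
    ← setIntegral_indicator measurableSet_Iic]
  simp only [Set.indicator_mul_right]
  rw [← integral_comp_sq]
  congr 1 with x
  simp only [Set.indicator_apply, Set.mem_Icc, Set.mem_Iic, ← abs_le, sq_le_sq, abs_of_nonneg ha]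

lemma integral_pow_mul_one_sub_sq_rpow (k : ℕ) {s : ℝ} (hs : 0 < s) :
    ∫ t in (-1 : ℝ)..1, t ^ (2 * k) * (1 - t ^ 2) ^ (s - 1) = beta (k + 1 / 2) s := by
  simp only [pow_mul]
  rw [intervalIntegral_comp_sq (fun u => u ^ k * (1 - u) ^ (s - 1)) zero_le_one, one_pow,
    ← integral_rpow_mul_one_sub_rpow (by positivity) hs]
  refine integral_congr_Ioo_of_le zero_le_one fun u hu => ?_
  rw [← mul_assoc, ← Real.rpow_natCast, ← Real.rpow_add hu.1]
  ring_nf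

end BetaIntegral

section Gegenbauer

/-- The symmetric Beta law on `[-1, 1]`, with density proportional to the Gegenbauer weight
`(1 - t²)^(s - 1)`. For `s = (N - 1)/2` it is the law of one coordinate of a uniform point of the
unit sphere of `ℝ^N`. The density is restricted to `(-1, 1]` since the real power is not the
intended weight outside `[-1, 1]`. -/
noncomputable def gegenbauerMeasure (s : ℝ) : Measure ℝ :=
  (volume.restrict (Set.Ioc (-1) 1)).withDensity fun t =>
    ENNReal.ofReal ((beta (1 / 2) s)⁻¹ * (1 - t ^ 2) ^ (s - 1))

variable {s : ℝ} {E : Type*} [NormedAddCommGroup E] [NormedSpace ℝ E]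

lemma ae_abs_le_one_gegenbauerMeasure (s : ℝ) : ∀ᵐ t ∂gegenbauerMeasure s, |t| ≤ 1 := by
  refine (withDensity_absolutelyContinuous _ _).ae_le ?_
  filter_upwards [ae_restrict_mem measurableSet_Ioc] with t ht
  exact abs_le.2 ⟨ht.1.le, ht.2⟩

lemma integral_gegenbauerMeasure (hs : 0 < s) (g : ℝ → E) :
    ∫ t, g t ∂gegenbauerMeasure s =
      (beta (1 / 2) s)⁻¹ • ∫ t in (-1 : ℝ)..1, (1 - t ^ 2) ^ (s - 1) • g t := by
  rw [gegenbauerMeasure, integral_withDensity_eq_integral_toReal_smul (by fun_prop)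
    (.of_forall fun _ => ENNReal.ofReal_lt_top), integral_of_le (by norm_num),
    ← MeasureTheory.integral_smul]
  refine setIntegral_congr_fun measurableSet_Ioc fun t ht => ?_
  have hbeta := (beta_pos one_half_pos hs).le
  have hweight : 0 ≤ 1 - t ^ 2 := sub_nonneg.2 ((sq_le_one_iff_abs_le_one t).2
    (abs_le.2 ⟨ht.1.le, ht.2⟩))
  rw [ENNReal.toReal_ofReal (by positivity), mul_smul]

lemma integral_neg_gegenbauerMeasure (hs : 0 < s) (g : ℝ → E) :
    ∫ t, g (-t) ∂gegenbauerMeasure s = ∫ t, g t ∂gegenbauerMeasure s := by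
  rw [integral_gegenbauerMeasure hs, integral_gegenbauerMeasure hs]
  have h := integral_comp_neg (a := -1) (b := 1) fun t : ℝ => (1 - t ^ 2) ^ (s - 1) • g t
  simp only [neg_sq, neg_neg] at h
  exact congrArg _ h

lemma integral_id_gegenbauerMeasure (hs : 0 < s) : ∫ t, t ∂gegenbauerMeasure s = 0 := by
  have h := integral_neg_gegenbauerMeasure hs fun t : ℝ => t
  rw [MeasureTheory.integral_neg] at h
  exact self_eq_neg.1 h.symm

lemma charFun_neg_gegenbauerMeasure (hs : 0 < s) (t : ℝ) :
    charFun (gegenbauerMeasure s) (-t) = charFun (gegenbauerMeasure s) t := by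
  simp only [charFun_apply_real]
  rw [← integral_neg_gegenbauerMeasure hs]
  simp only [Complex.ofReal_neg, neg_mul_neg]

lemma integral_even_pow_gegenbauerMeasure (hs : 0 < s) (k : ℕ) :
    ∫ t, t ^ (2 * k) ∂gegenbauerMeasure s = beta (k + 1 / 2) s / beta (1 / 2) s := by
  rw [integral_gegenbauerMeasure hs, ← integral_pow_mul_one_sub_sq_rpow k hs, smul_eq_mul,
    inv_mul_eq_div]
  simp only [smul_eq_mul, mul_comm]

lemma isProbabilityMeasure_gegenbauerMeasure (hs : 0 < s) :
    IsProbabilityMeasure (gegenbauerMeasure s) := by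
  have hmass : (gegenbauerMeasure s).real Set.univ = 1 := by
    have h := integral_even_pow_gegenbauerMeasure hs 0
    rw [Nat.cast_zero, zero_add, div_self (beta_pos one_half_pos hs).ne'] at h
    simpa only [mul_zero, pow_zero, MeasureTheory.integral_const, smul_eq_mul, mul_one] using h
  exact ⟨(ENNReal.toReal_eq_one_iff _).1 hmass⟩

lemma integral_sq_gegenbauerMeasure (hs : 0 < s) :
    ∫ t, t ^ 2 ∂gegenbauerMeasure s = 1 / (2 * s + 1) := by
  have h := integral_even_pow_gegenbauerMeasure hs 1
  rw [mul_one] at h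
  have hΓs := (Real.Gamma_pos_of_pos hs).ne'
  have hΓhalf := (Real.Gamma_pos_of_pos one_half_pos).ne'
  rw [h, beta, beta, Nat.cast_one, add_comm 1 (1 / 2 : ℝ), add_right_comm,
    Real.Gamma_add_one (by positivity), Real.Gamma_add_one (by positivity)]
  field_simp
  ring

end Gegenbauer

lemma sphereFT_eq_charFun {N : ℕ} (hN : 2 ≤ N) (R : ℝ) (ζ : EuclideanSpace ℝ (Fin N)) :
    sphereFT N R ζ = charFun (gegenbauerMeasure (((N : ℝ) - 1) / 2)) (2 * π * R * ‖ζ‖) := by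
  have hN' : (2 : ℝ) ≤ N := by exact_mod_cast hN
  have hconst : Real.Gamma ((N : ℝ) / 2) / (Real.Gamma (((N : ℝ) - 1) / 2) * √π) =
      (beta (1 / 2) (((N : ℝ) - 1) / 2))⁻¹ := by
    rw [beta, Real.Gamma_one_half_eq, inv_div]
    ring_nf
  rw [sphereFT, charFun_apply_real, integral_gegenbauerMeasure (by linarith), hconst,
    Complex.real_smul]
  congr 2 with t
  rw [Complex.real_smul, mul_comm]
  push_cast
  ring_nf

lemma sphereFT_smul_eq_charFun {N : ℕ} (hN : 2 ≤ N) (R : ℝ) (ζ : EuclideanSpace ℝ (Fin N)) (s : ℝ) :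
    sphereFT N R (s • ζ) =
      charFun (gegenbauerMeasure (((N : ℝ) - 1) / 2)) (2 * π * R * ‖ζ‖ * s) := by
  have hN' : (2 : ℝ) ≤ N := by exact_mod_cast hN
  rw [sphereFT_eq_charFun hN, norm_smul, Real.norm_eq_abs, mul_left_comm, mul_comm |s|]
  rcases abs_choice s with hs | hs
  · rw [hs]
  · rw [hs, mul_neg, charFun_neg_gegenbauerMeasure (by linarith)]

theorem sphereFT_deriv_small_bound_general {N : ℕ} (hN : 2 ≤ N) {R : ℝ}
    {ζ : EuclideanSpace ℝ (Fin N)} (hζ : |2 * π * R * ‖ζ‖| ≤ 1) {α : ℕ} (hα : 1 ≤ α) (r : ℝ) :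
    ‖iteratedDeriv α (fun s : ℝ => sphereFT N R (s • ζ)) r‖ ≤
      max 1 |r| / N * (2 * π * R * ‖ζ‖) ^ 2 := by
  have hs : 0 < ((N : ℝ) - 1) / 2 := by
    have : (2 : ℝ) ≤ N := by exact_mod_cast hN
    linarith
  have := isProbabilityMeasure_gegenbauerMeasure hs
  have hvar : ∫ t, t ^ 2 ∂gegenbauerMeasure (((N : ℝ) - 1) / 2) = 1 / N := by
    rw [integral_sq_gegenbauerMeasure hs, mul_div_cancel₀ _ two_ne_zero, sub_add_cancel]
  have h := norm_iteratedDeriv_charFun_const_mul_le (ae_abs_le_one_gegenbauerMeasure _)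
    (integral_id_gegenbauerMeasure hs) hα hζ r
  rw [hvar, mul_one_div] at h
  simpa only [sphereFT_smul_eq_charFun hN] using h

/-- Small-frequency derivative bound: if `α ≥ 1` and `2πR|ζ| < 1` then there is `C' < 1`
(depending on `N`, `α`) with `|(d/dr)^α m̃(rζ)| ≤ C' (2πR|ζ|)²` for all `1 ≤ r ≤ 2`. -/
theorem sphereFT_deriv_small_bound (N : ℕ) (hN : 3 ≤ N) (R : ℝ) (hR : 0 < R)
    (hRsurf : R ^ (N - 1) = Real.Gamma ((N:ℝ)/2) / (2 * (π : ℝ) ^ ((N:ℝ)/2)))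
    (α : ℕ) (hα : 1 ≤ α) :
    ∃ C' : ℝ, C' < 1 ∧
      ∀ ζ : EuclideanSpace ℝ (Fin N), 2 * π * R * ‖ζ‖ < 1 →
        ∀ r : ℝ, 1 ≤ r → r ≤ 2 →
          ‖iteratedDeriv α (fun s : ℝ => sphereFT N R (s • ζ)) r‖
            ≤ C' * (2 * π * R * ‖ζ‖) ^ 2 := by
  refine ⟨2 / 3, by norm_num, fun ζ hζ r hr1 hr2 => ?_⟩
  have hζ_abs : |2 * π * R * ‖ζ‖| ≤ 1 := by rw [abs_of_nonneg (by positivity)]; exact hζ.le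
  refine (sphereFT_deriv_small_bound_general (by lia) hζ_abs hα r).trans ?_
  gcongr
  · exact max_le one_le_two (abs_le.2 ⟨by linarith, hr2⟩)
  · exact_mod_cast hN
end
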